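/- arXiv:2506.11872 — 2 statements merged into one kernel-verified Lean document; each statement's English description precedes it below -/
import Mathlib

section
/- Let X be a real Banach space having property (E) and let Y ⊆ X* be a norming norm-closed linear subspace. Let M : Σ → b(X) be a set-valued map defined on a σ-algebra Σ such that: (i) M(A) is relatively σ(X,Y)-compact for every A ∈ Σ; and (ii) the support map s(x*,M) is countably additive for every x* ∈ Y. Then the set ⋃_{A∈Σ} M(A) is relatively σ(X,Y)-compact. -/
/-- The topology `σ(X, Y)` of pointwise convergence on a set `Y ⊆ X*`. -/
def sigmaTop {X : Type*} [NormedAddCommGroup X] [NormedSpace ℝ X]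
    (Y : Set (X →L[ℝ] ℝ)) : TopologicalSpace X :=
  TopologicalSpace.induced (fun x => fun y : Y => (y : X →L[ℝ] ℝ) x) Pi.topologicalSpace

/-- The weak* topology on `X*`: pointwise convergence on `X`. -/
def weakStarTop (X : Type*) [NormedAddCommGroup X] [NormedSpace ℝ X] :
    TopologicalSpace (X →L[ℝ] ℝ) :=
  TopologicalSpace.induced (fun f : X →L[ℝ] ℝ => fun x : X => f x) Pi.topologicalSpace

/-- Property (E) of Efremov: every point of the weak*-closure of a convex bounded set
`C ⊆ X*` is the weak* limit of a sequence from `C`. -/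
def PropertyE (X : Type*) [NormedAddCommGroup X] [NormedSpace ℝ X] : Prop :=
  ∀ C : Set (X →L[ℝ] ℝ), Convex ℝ C → Bornology.IsBounded C →
    ∀ f : X →L[ℝ] ℝ, f ∈ @closure (X →L[ℝ] ℝ) (weakStarTop X) C →
      ∃ g : ℕ → X →L[ℝ] ℝ, (∀ n, g n ∈ C) ∧
        ∀ x : X, Filter.Tendsto (fun n => g n x) Filter.atTop (nhds (f x))

/-- A linear subspace `Y ⊆ X*` is norming: `x ↦ sup {|x*(x)| : x* ∈ Y, ‖x*‖ ≤ 1}` is an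
equivalent norm on `X`. -/
def IsNorming {X : Type*} [NormedAddCommGroup X] [NormedSpace ℝ X]
    (Y : Submodule ℝ (X →L[ℝ] ℝ)) : Prop :=
  ∃ c : ℝ, 0 < c ∧ ∀ x : X,
    c * ‖x‖ ≤ sSup ((fun f : X →L[ℝ] ℝ => |f x|) ''
      ((Y : Set (X →L[ℝ] ℝ)) ∩ Metric.closedBall 0 1))

/-- The support functional `s(x*, C) = sup x*(C)`. -/
noncomputable def supportFn {X : Type*} [NormedAddCommGroup X] [NormedSpace ℝ X]
    (f : X →L[ℝ] ℝ) (C : Set X) : ℝ := sSup (f '' C)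

/-- A set function on a σ-algebra, with values in a topological abelian monoid, is
countably additive. -/
def CountablyAdditive {Ω E : Type*} [MeasurableSpace Ω] [AddCommMonoid E]
    [TopologicalSpace E] (ν : Set Ω → E) : Prop :=
  ∀ A : ℕ → Set Ω, (∀ n, MeasurableSet (A n)) → Pairwise (Function.onFun Disjoint A) →
    HasSum (fun n => ν (A n)) (ν (⋃ n, A n))

/-! Write `R = ⋃ M(A)`. Each `s(f, M)` with `f ∈ Y` is a finite signed measure, so `R` is bounded
at every `f ∈ Y` and, by Banach–Steinhaus, uniformly on the unit ball of `Y`. Along an ultrafilter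
on `R` the points therefore converge to a functional `φ ∈ Y*`, and `φ` must be shown to be the
evaluation at some `x ∈ X`. By property (E) and a Helly-type argument, this can only fail if some
sequence `fₙ` in the unit ball of `Y` converges weak* to `0` while `φ(fₙ) ≥ ε` for all `n`.

Such a sequence is impossible. Choose a finite measure `ρ` dominating all `s(fₙ, M)`, and for each
`x ∈ R` a set `A x` with `x ∈ M(A x)`. Along the ultrafilter the indicators of the `A x` converge
weakly in `L²(ρ)` to some `0 ≤ h ≤ 1`, so that, for convex combinations `g` of the `fₙ`, `φ(g)` is
at most the integral of `h` against `s(g, M)`. Approximating `h` by a simple function, that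
integral is below `ε` as soon as `g` is small on `M(B)` for the finitely many fibres `B` of the
simple function. Since the `M(B)` are relatively compact and `fₙ → 0` boundedly, Mazur's lemma
provides such a `g`, although `φ(g) ≥ ε`. -/

open MeasureTheory Filter Topology

section Mazur

variable {K : Type*} [TopologicalSpace K]

theorem map_nonneg_of_forall_lt_of_pos [CompactSpace K] {Λ : StrongDual ℝ C(K, ℝ)} {c δ : ℝ}
    (hδ : 0 < δ) (hΛ : ∀ u : C(K, ℝ), (∀ x, u x < δ) → Λ u < c) {u : C(K, ℝ)} (hu : 0 ≤ u) :
    0 ≤ Λ u := by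
  have hc : 0 < c := by simpa using hΛ 0 fun _ => hδ
  by_contra! hneg
  have hscale : Λ ((c / Λ u) • u) < c := hΛ _ fun x =>
    (mul_nonpos_of_nonpos_of_nonneg (div_nonpos_of_nonneg_of_nonpos hc.le hneg.le)
      (hu x)).trans_lt hδ
  rw [map_smul, smul_eq_mul, div_mul_cancel₀ _ hneg.ne] at hscale
  exact hscale.false

theorem exists_isFiniteMeasure_integral_eq [CompactSpace K] [T2Space K] [MeasurableSpace K]
    [BorelSpace K] (Λ : C(K, ℝ) →ₗ[ℝ] ℝ) (hΛ : ∀ u, 0 ≤ u → 0 ≤ Λ u) :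
    ∃ μ : Measure K, IsFiniteMeasure μ ∧ ∀ u : C(K, ℝ), ∫ x, u x ∂μ = Λ u := by
  let Λc : CompactlySupportedContinuousMap K ℝ →ₗ[ℝ] ℝ :=
    { toFun := fun u => Λ u.toContinuousMap
      map_add' := fun u v => map_add Λ u.toContinuousMap v.toContinuousMap
      map_smul' := fun r u => map_smul Λ r u.toContinuousMap }
  let Λpos := PositiveLinearMap.mk₀ Λc fun u hu =>
    hΛ _ (CompactlySupportedContinuousMap.le_def.1 hu)
  exact ⟨RealRMK.rieszMeasure Λpos, ⟨isCompact_univ.measure_lt_top⟩, fun u =>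
    RealRMK.integral_rieszMeasure Λpos (CompactlySupportedContinuousMap.continuousMapEquiv u)⟩

theorem exists_mem_convexHull_forall_lt [CompactSpace K] [T2Space K] {F : ℕ → C(K, ℝ)} {C : ℝ}
    (hC : ∀ n x, |F n x| ≤ C) (hF : ∀ x, Tendsto (fun n => F n x) atTop (𝓝 0)) {δ : ℝ}
    (hδ : 0 < δ) : ∃ g ∈ convexHull ℝ (Set.range F), ∀ x, g x < δ := by
  by_contra! hge
  have hopen : IsOpen {u : C(K, ℝ) | ∀ x, u x < δ} := by
    simpa [Set.MapsTo] using
      ContinuousMap.isOpen_setOfPred_mapsTo (X := K) isCompact_univ (isOpen_Iio (a := δ))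
  have hconvex : Convex ℝ {u : C(K, ℝ) | ∀ x, u x < δ} := fun u hu v hv _ _ ha hb hab x =>
    convex_Iio δ (hu x) (hv x) ha hb hab
  have hdisjoint : Disjoint {u : C(K, ℝ) | ∀ x, u x < δ} (convexHull ℝ (Set.range F)) :=
    Set.disjoint_left.2 fun u hlt hu => (hge u hu).elim fun x hx => (hlt x).not_ge hx
  obtain ⟨Λ, c, hlt, hle⟩ :=
    geometric_hahn_banach_open hconvex hopen (convex_convexHull ℝ _) hdisjoint
  have hc : 0 < c := by simpa using hlt 0 fun _ => hδ
  borelize K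
  obtain ⟨μ, _, hμ⟩ := exists_isFiniteMeasure_integral_eq Λ.toLinearMap fun u hu =>
    map_nonneg_of_forall_lt_of_pos hδ hlt hu
  have hlim : Tendsto (fun n => ∫ x, F n x ∂μ) atTop (𝓝 (∫ _, (0 : ℝ) ∂μ)) :=
    tendsto_integral_of_dominated_convergence (fun _ => C)
      (fun n => (F n).continuous.aestronglyMeasurable) (integrable_const C)
      (fun n => ae_of_all _ (hC n)) (ae_of_all _ hF)
  rw [integral_zero] at hlim
  exact hc.not_ge <| ge_of_tendsto' hlim fun n =>
    (hle _ (subset_convexHull ℝ _ ⟨n, rfl⟩)).trans_eq (hμ (F n)).symm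

theorem exists_mem_convexHull_forall_mem_lt [T2Space K] {E : Type*} [AddCommGroup E] [Module ℝ E]
    (T : E →ₗ[ℝ] K → ℝ) {f : ℕ → E} (hf : ∀ n, Continuous (T (f n))) {S : Set K}
    (hS : IsCompact (closure S)) {C : ℝ} (hC : ∀ n, ∀ x ∈ S, |T (f n) x| ≤ C)
    (hlim : ∀ x, Tendsto (fun n => T (f n) x) atTop (𝓝 0)) {δ : ℝ} (hδ : 0 < δ) :
    ∃ g ∈ convexHull ℝ (Set.range f), ∀ x ∈ S, T g x < δ := by
  have : CompactSpace (closure S) := isCompact_iff_compactSpace.1 hS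
  have hC_closure (n : ℕ) : ∀ x ∈ closure S, |T (f n) x| ≤ C :=
    closure_minimal (hC n) (isClosed_le (hf n).abs continuous_const)
  let F (n : ℕ) : C(closure S, ℝ) := ⟨fun x => T (f n) x, (hf n).comp continuous_subtype_val⟩
  obtain ⟨u, hu, hlt⟩ := exists_mem_convexHull_forall_lt (F := F)
    (fun n x => hC_closure n x x.2) (fun x => hlim x) hδ
  let restrict : E →ₗ[ℝ] closure S → ℝ := LinearMap.funLeft ℝ ℝ Subtype.val ∘ₗ T
  have hu' : ⇑u ∈ restrict '' convexHull ℝ (Set.range f) := by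
    have hcoe := Set.mem_image_of_mem (ContinuousMap.coeFnLinearMap ℝ (M := ℝ)) hu
    rw [LinearMap.image_convexHull, ← Set.range_comp] at hcoe
    rwa [LinearMap.image_convexHull, ← Set.range_comp]
  obtain ⟨g, hg, hgu⟩ := hu'
  exact ⟨g, hg, fun x hx => (congr_fun hgu ⟨x, subset_closure hx⟩).trans_lt (hlt _)⟩

end Mazur

theorem exists_forall_tendsto_of_eventually_norm_le {T E : Type*} [SeminormedAddCommGroup E]
    [NormedSpace ℝ E] (U : Ultrafilter T) {w : T → StrongDual ℝ E} {r : ℝ}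
    (hw : ∀ᶠ t in U, ‖w t‖ ≤ r) :
    ∃ φ : StrongDual ℝ E, ∀ v, Tendsto (fun t => w t v) U (𝓝 (φ v)) := by
  have hball : ∀ᶠ t in U, StrongDual.toWeakDual (w t) ∈
      WeakDual.toStrongDual ⁻¹' Metric.closedBall (0 : StrongDual ℝ E) r := by
    simpa using hw
  obtain ⟨φ, -, hφ⟩ := (WeakDual.isCompact_closedBall 0 r).ultrafilter_le_nhds'
    (U.map fun t => StrongDual.toWeakDual (w t)) hball
  exact ⟨WeakDual.toStrongDual φ, fun v => ((WeakDual.eval_continuous v).tendsto φ).comp hφ⟩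

-- An ultrafilter `W` on `closure S` is traded for an ultrafilter on `S` containing the open
-- members of `W`; by regularity `W` converges to the same limit.
theorem isCompact_closure_of_forall_ultrafilter_le_nhds {Z : Type*} [TopologicalSpace Z]
    [RegularSpace Z] {S : Set Z} (hS : ∀ U : Ultrafilter Z, S ∈ U → ∃ z, (U : Filter Z) ≤ 𝓝 z) :
    IsCompact (closure S) := by
  refine isCompact_iff_ultrafilter_le_nhds'.2 fun W hW => ?_
  have hne : (Filter.bind W 𝓝 ⊓ 𝓟 S).NeBot := inf_principal_neBot_iff.2 fun A hA => by
    obtain ⟨w, hAw, hw⟩ := W.nonempty_of_mem (inter_mem (mem_bind'.1 hA) hW)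
    exact mem_closure_iff_nhds.1 hw A hAw
  let U := Ultrafilter.of (Filter.bind W 𝓝 ⊓ 𝓟 S)
  have hUW : (U : Filter Z) ≤ Filter.bind W 𝓝 := (Ultrafilter.of_le _).trans inf_le_left
  have hUS : S ∈ U := le_principal_iff.1 ((Ultrafilter.of_le _).trans inf_le_right)
  obtain ⟨z, hz⟩ := hS U hUS
  refine ⟨z, mem_closure_iff_ultrafilter.2 ⟨U, hUS, hz⟩, ?_⟩
  refine (closed_nhds_basis z).ge_iff.2 fun N ⟨hNz, hN⟩ => ?_
  by_contra hNW
  have hNc : Nᶜ ∈ Filter.bind W 𝓝 :=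
    mem_bind'.2 (mem_of_superset (Ultrafilter.compl_mem_iff_notMem.2 hNW)
      fun w hw => hN.isOpen_compl.mem_nhds hw)
  exact Ultrafilter.compl_mem_iff_notMem.1 (hUW hNc) (hz hNz)

section Measure

variable {Ω : Type*} [MeasurableSpace Ω]

theorem exists_isFiniteMeasure_forall_measureReal_le_mul (μ : ℕ → Measure Ω)
    [∀ n, IsFiniteMeasure (μ n)] :
    ∃ ρ : Measure Ω, IsFiniteMeasure ρ ∧ ∀ n, ∃ c : ℝ, ∀ B, (μ n).real B ≤ c * ρ.real B := by
  obtain ⟨a, ha, hsum⟩ := ENNReal.exists_pos_tsum_mul_lt_of_countable one_ne_zero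
    (fun n => μ n Set.univ) fun n => measure_ne_top _ _
  let ρ := Measure.sum fun n => a n • μ n
  have hρ : IsFiniteMeasure ρ := ⟨by
    rw [Measure.sum_apply _ MeasurableSet.univ]
    refine lt_of_eq_of_lt (tsum_congr fun n => ?_) (hsum.trans ENNReal.one_lt_top)
    rw [Measure.smul_apply, ENNReal.smul_def, smul_eq_mul, mul_comm]⟩
  refine ⟨ρ, hρ, fun n => ⟨(a n : ℝ)⁻¹, fun B => ?_⟩⟩
  have hle : (a n • μ n).real B ≤ ρ.real B :=
    ENNReal.toReal_mono (measure_ne_top _ _) (Measure.le_sum (fun n => a n • μ n) n B)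
  rw [measureReal_nnreal_smul_apply] at hle
  rwa [inv_mul_eq_div, le_div_iff₀' (NNReal.coe_pos.2 (ha n))]

theorem exists_ae_abs_le_and_eq_setIntegral {ρ : Measure Ω} [IsFiniteMeasure ρ]
    {ν : SignedMeasure Ω} {c : ℝ} (hν : ∀ B, MeasurableSet B → |ν B| ≤ c * ρ.real B) :
    ∃ p : Ω → ℝ, Measurable p ∧ (∀ᵐ ω ∂ρ, |p ω| ≤ c) ∧
      ∀ B, MeasurableSet B → ν B = ∫ ω in B, p ω ∂ρ := by
  have hac : ν ≪ᵥ ρ.toENNRealVectorMeasure :=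
    VectorMeasure.AbsolutelyContinuous.mk fun B hB hρB => by
      rw [Measure.toENNRealVectorMeasure_apply_measurable hB] at hρB
      simpa [Measure.real, hρB] using hν B hB
  have hint : Integrable (ν.rnDeriv ρ) ρ := SignedMeasure.integrable_rnDeriv ν ρ
  have hdensity (B : Set Ω) (hB : MeasurableSet B) : ν B = ∫ ω in B, ν.rnDeriv ρ ω ∂ρ := by
    rw [← withDensityᵥ_apply hint hB, SignedMeasure.withDensityᵥ_rnDeriv_eq ν ρ hac]
  refine ⟨ν.rnDeriv ρ, SignedMeasure.measurable_rnDeriv ν ρ, ?_, hdensity⟩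
  have hle : ν.rnDeriv ρ ≤ᵐ[ρ] fun _ => c :=
    ae_le_of_forall_setIntegral_le hint (integrable_const c) fun B hB _ => by
      rw [← hdensity B hB, setIntegral_const, smul_eq_mul, mul_comm]
      exact (abs_le.1 (hν B hB)).2
  have hge : (fun _ => -c) ≤ᵐ[ρ] ν.rnDeriv ρ :=
    ae_le_of_forall_setIntegral_le (integrable_const _) hint fun B hB _ => by
      rw [← hdensity B hB, setIntegral_const, smul_eq_mul, mul_neg, mul_comm]
      exact (abs_le.1 (hν B hB)).1
  filter_upwards [hle, hge] with ω h₁ h₂ using abs_le.2 ⟨h₂, h₁⟩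

theorem exists_memLp_tendsto_setIntegral (ρ : Measure Ω) [IsFiniteMeasure ρ] {T : Type*}
    (U : Ultrafilter T) {A : T → Set Ω} (hA : ∀ t, MeasurableSet (A t)) :
    ∃ h : Ω → ℝ, MemLp h 2 ρ ∧ ∀ p : Ω → ℝ, MemLp p 2 ρ →
      Tendsto (fun t => ∫ ω in A t, p ω ∂ρ) U (𝓝 (∫ ω, h ω * p ω ∂ρ)) := by
  let indicatorLp (t : T) : Lp ℝ 2 ρ := indicatorConstLp 2 (hA t) (measure_ne_top ρ _) (1 : ℝ)
  have hnorm (t : T) : ‖indicatorLp t‖ ≤ ρ.real Set.univ ^ (1 / (2 : ENNReal).toReal) := by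
    rw [norm_indicatorConstLp (by norm_num) (by norm_num), norm_one, one_mul]
    exact Real.rpow_le_rpow measureReal_nonneg (measureReal_mono (Set.subset_univ _))
      (by positivity)
  let toDual := InnerProductSpace.toDual ℝ (Lp ℝ 2 ρ)
  obtain ⟨ψ, hψ⟩ := exists_forall_tendsto_of_eventually_norm_le U
    (w := fun t => toDual (indicatorLp t))
    (Eventually.of_forall fun t => (toDual.norm_map _).trans_le (hnorm t))
  let h := toDual.symm ψ
  refine ⟨h, Lp.memLp h, fun p hp => ?_⟩
  have hlimit : ψ (hp.toLp p) = ∫ ω, h ω * p ω ∂ρ := by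
    rw [← InnerProductSpace.toDual_symm_apply, L2.inner_def]
    refine integral_congr_ae ?_
    filter_upwards [hp.coeFn_toLp] with ω hω
    simp [hω, h, toDual, mul_comm]
  rw [← hlimit]
  refine (hψ (hp.toLp p)).congr fun t => ?_
  rw [InnerProductSpace.toDual_apply_apply, L2.inner_indicatorConstLp_one]
  exact integral_congr_ae (ae_restrict_of_ae hp.coeFn_toLp)

theorem exists_mem_Icc_tendsto_setIntegral (ρ : Measure Ω) [IsFiniteMeasure ρ] {T : Type*}
    (U : Ultrafilter T) {A : T → Set Ω} (hA : ∀ t, MeasurableSet (A t)) :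
    ∃ h : Ω → ℝ, Measurable h ∧ (∀ ω, h ω ∈ Set.Icc 0 1) ∧ ∀ p : Ω → ℝ, MemLp p 2 ρ →
      Tendsto (fun t => ∫ ω in A t, p ω ∂ρ) U (𝓝 (∫ ω, h ω * p ω ∂ρ)) := by
  obtain ⟨h, hh, hlim⟩ := exists_memLp_tendsto_setIntegral ρ U hA
  have hint : Integrable h ρ := hh.integrable one_le_two
  have hlim_set (B : Set Ω) (hB : MeasurableSet B) :
      Tendsto (fun t => ρ.real (B ∩ A t)) U (𝓝 (∫ ω in B, h ω ∂ρ)) := by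
    have := hlim (B.indicator 1) (memLp_indicator_const 2 hB 1 (Or.inr (measure_ne_top _ _)))
    simpa [← Set.indicator_mul_right, integral_indicator hB, measureReal_restrict_apply hB]
      using this
  have hnonneg : 0 ≤ᵐ[ρ] h := ae_nonneg_of_forall_setIntegral_nonneg hint fun B hB _ =>
    ge_of_tendsto' (hlim_set B hB) fun _ => measureReal_nonneg
  have hle_one : h ≤ᵐ[ρ] fun _ => 1 :=
    ae_le_of_forall_setIntegral_le hint (integrable_const 1) fun B hB _ => by
      rw [setIntegral_const, smul_eq_mul, mul_one]
      exact le_of_tendsto' (hlim_set B hB) fun _ => measureReal_mono Set.inter_subset_left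
  obtain ⟨h', hh', hae_eq⟩ := hh.aestronglyMeasurable.aemeasurable
  refine ⟨fun ω => max 0 (min 1 (h' ω)), by fun_prop,
    fun ω => ⟨le_max_left _ _, max_le zero_le_one (min_le_left _ _)⟩, fun p hp => ?_⟩
  have hae : (fun ω => max 0 (min 1 (h' ω)) * p ω) =ᵐ[ρ] fun ω => h ω * p ω := by
    filter_upwards [hnonneg, hle_one, hae_eq] with ω h₀ h₁ hω
    rw [← hω, min_eq_right h₁, max_eq_right (show 0 ≤ h ω from h₀)]
  rw [integral_congr_ae hae]
  exact hlim p hp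

theorem integral_abs_le_two_mul {ρ : Measure Ω} {p : Ω → ℝ} (hpm : Measurable p)
    (hp : Integrable p ρ) {C : ℝ} (hC : ∀ B, MeasurableSet B → |∫ ω in B, p ω ∂ρ| ≤ C) :
    ∫ ω, |p ω| ∂ρ ≤ 2 * C := by
  have hpos := abs_le.1 (hC _ (measurableSet_le measurable_const hpm : MeasurableSet {ω | 0 ≤ p ω}))
  have hneg := abs_le.1 (hC _ (measurableSet_le hpm measurable_const : MeasurableSet {ω | p ω ≤ 0}))
  simp only [← Real.norm_eq_abs]
  rw [integral_norm_eq_pos_sub_neg hp]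
  linarith

theorem exists_simpleFunc_abs_sub_le {h : Ω → ℝ} (hh : Measurable h) {b : ℝ}
    (hb : ∀ ω, h ω ∈ Set.Icc 0 b) {η : ℝ} (hη : 0 < η) :
    ∃ s : SimpleFunc Ω ℝ, (∀ ω, s ω ∈ Set.Icc 0 b) ∧ ∀ ω, |h ω - s ω| ≤ η := by
  have hfloor (ω : Ω) : η * ⌊h ω / η⌋₊ ≤ h ω ∧ h ω ≤ η * ⌊h ω / η⌋₊ + η := by
    have hcancel : η * (h ω / η) = h ω := mul_div_cancel₀ _ hη.ne'
    constructor
    · nlinarith [Nat.floor_le (div_nonneg (hb ω).1 hη.le)]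
    · nlinarith [Nat.lt_floor_add_one (h ω / η)]
  let s : SimpleFunc Ω ℝ :=
    { toFun := fun ω => η * ⌊h ω / η⌋₊
      measurableSet_fiber' := fun r =>
        (by fun_prop : Measurable fun ω => η * (⌊h ω / η⌋₊ : ℝ)) (measurableSet_singleton r)
      finite_range' := ((Set.finite_Iic ⌊b / η⌋₊).image fun k : ℕ => η * (k : ℝ)).subset <| by
        rintro _ ⟨ω, rfl⟩
        exact ⟨_, Nat.floor_mono (div_le_div_of_nonneg_right (hb ω).2 hη.le), rfl⟩ }
  refine ⟨s, fun ω => ⟨mul_nonneg hη.le (Nat.cast_nonneg _), (hfloor ω).1.trans (hb ω).2⟩,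
    fun ω => ?_⟩
  change |h ω - η * ⌊h ω / η⌋₊| ≤ η
  rw [abs_of_nonneg (sub_nonneg.2 (hfloor ω).1)]
  exact sub_le_iff_le_add'.2 (hfloor ω).2

theorem integral_simpleFunc_mul (s : SimpleFunc Ω ℝ) {ρ : Measure Ω} {p : Ω → ℝ}
    (hp : Integrable p ρ) :
    ∫ ω, s ω * p ω ∂ρ = ∑ r ∈ s.range, r * ∫ ω in s ⁻¹' {r}, p ω ∂ρ := by
  classical
  have hsum (ω : Ω) : s ω * p ω = ∑ r ∈ s.range, r * (s ⁻¹' {r}).indicator p ω := by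
    simp [Set.indicator_apply]
  simp_rw [hsum]
  rw [integral_finsetSum _ fun r _ => (hp.indicator (s.measurableSet_fiber r)).const_mul r]
  simp_rw [integral_const_mul, integral_indicator (s.measurableSet_fiber _)]

theorem integral_mul_le_integral_simpleFunc_mul_add {ρ : Measure Ω} {h p : Ω → ℝ}
    (s : SimpleFunc Ω ℝ) {η : ℝ} (hs : ∀ ω, |h ω - s ω| ≤ η) (hp : Integrable p ρ)
    (hhp : Integrable (fun ω => h ω * p ω) ρ) :
    ∫ ω, h ω * p ω ∂ρ ≤ ∫ ω, s ω * p ω ∂ρ + η * ∫ ω, |p ω| ∂ρ := by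
  obtain ⟨c, hc⟩ := s.exists_forall_norm_le
  have hsp : Integrable (fun ω => s ω * p ω) ρ :=
    hp.bdd_mul s.aestronglyMeasurable (ae_of_all _ hc)
  rw [← integral_const_mul, ← integral_add hsp (hp.abs.const_mul η)]
  refine integral_mono hhp (hsp.add (hp.abs.const_mul η)) fun ω => ?_
  have herror : (h ω - s ω) * p ω ≤ η * |p ω| :=
    (le_abs_self _).trans <| (abs_mul _ _).trans_le <|
      mul_le_mul_of_nonneg_right (hs ω) (abs_nonneg _)
  linarith

-- The test sets are the fibres of a simple function approximating the weak `L²` limit `h` of the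
-- indicators of `A t`, because `ν (A t)` tends to the integral of `h` against `ν`.
theorem exists_finite_forall_eventually_lt (ρ : Measure Ω) [IsFiniteMeasure ρ] {T : Type*}
    (U : Ultrafilter T) {A : T → Set Ω} (hA : ∀ t, MeasurableSet (A t)) (C : ℝ) {ε : ℝ}
    (hε : 0 < ε) :
    ∃ 𝓑 : Set (Set Ω), 𝓑.Finite ∧ (∀ B ∈ 𝓑, MeasurableSet B) ∧ ∃ δ > 0, ∀ ν : SignedMeasure Ω,
      (∃ c, ∀ B, MeasurableSet B → |ν B| ≤ c * ρ.real B) →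
      (∀ B, MeasurableSet B → |ν B| ≤ C) → (∀ B ∈ 𝓑, ν B ≤ δ) → ∀ᶠ t in U, ν (A t) < ε := by
  obtain ⟨h, hh, hIcc, hlim⟩ := exists_mem_Icc_tendsto_setIntegral ρ U hA
  obtain ⟨η, hη, hηC⟩ := exists_pos_mul_lt (half_pos hε) (2 * C)
  obtain ⟨s, hs, hhs⟩ := exists_simpleFunc_abs_sub_le hh hIcc hη
  obtain ⟨δ, hδ, hδε⟩ := exists_pos_mul_lt (half_pos hε) (s.range.card : ℝ)
  refine ⟨(fun r => s ⁻¹' {r}) '' s.range, s.range.finite_toSet.image _,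
    Set.forall_mem_image.2 fun r _ => s.measurableSet_fiber r, δ, hδ, ?_⟩
  rintro ν ⟨c, hc⟩ hνC hνδ
  obtain ⟨p, hpm, hpc, hνp⟩ := exists_ae_abs_le_and_eq_setIntegral hc
  have hp2 : MemLp p 2 ρ := .of_bound hpm.aestronglyMeasurable c hpc
  have hp : Integrable p ρ := hp2.integrable one_le_two
  have hhp : Integrable (fun ω => h ω * p ω) ρ :=
    hp.bdd_mul (c := 1) hh.aestronglyMeasurable <| ae_of_all _ fun ω =>
      abs_le.2 ⟨by linarith [(hIcc ω).1], (hIcc ω).2⟩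
  have habs : ∫ ω, |p ω| ∂ρ ≤ 2 * C :=
    integral_abs_le_two_mul hpm hp fun B hB => hνp B hB ▸ hνC B hB
  have hsimple : ∫ ω, s ω * p ω ∂ρ ≤ s.range.card * δ := by
    rw [integral_simpleFunc_mul s hp, ← nsmul_eq_mul]
    refine Finset.sum_le_card_nsmul _ _ _ fun r hr => ?_
    obtain ⟨ω, rfl⟩ := SimpleFunc.mem_range.1 hr
    rw [← hνp _ (s.measurableSet_fiber _)]
    nlinarith [hνδ _ (Set.mem_image_of_mem _ hr), (hs ω).1, (hs ω).2]
  have hlimit : ∫ ω, h ω * p ω ∂ρ < ε := by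
    calc ∫ ω, h ω * p ω ∂ρ ≤ ∫ ω, s ω * p ω ∂ρ + η * ∫ ω, |p ω| ∂ρ :=
          integral_mul_le_integral_simpleFunc_mul_add s hhs hp hhp
      _ ≤ s.range.card * δ + η * (2 * C) := by gcongr
      _ < ε := by linarith
  filter_upwards [(hlim p hp2).eventually_lt_const hlimit] with t ht
  rwa [hνp _ (hA t)]

theorem exists_signedMeasure_forall_eq {ν : Set Ω → ℝ} (hν : CountablyAdditive ν) :
    ∃ σ : SignedMeasure Ω, ∀ B, MeasurableSet B → σ B = ν B := by
  classical
  have hempty : ν ∅ = 0 := by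
    have h := hν (fun _ => ∅) (fun _ => .empty) fun _ _ _ => disjoint_bot_left
    simpa using (summable_const_iff _).1 h.summable
  refine ⟨{ measureOf' := fun B => if MeasurableSet B then ν B else 0
            empty' := by simp [hempty]
            not_measurable' := fun B hB => if_neg hB
            m_iUnion' := fun A hA hd => ?_ }, fun B hB => if_pos hB⟩
  simpa [hA, MeasurableSet.iUnion hA] using hν A hA hd

end Measure

section WeakTopology

variable {X : Type*} [NormedAddCommGroup X] [NormedSpace ℝ X]

theorem tendsto_nhds_sigmaTop {T : Type*} {l : Filter T} {w : T → X} {Y : Set (X →L[ℝ] ℝ)}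
    {x : X} : Tendsto w l (@nhds X (sigmaTop Y) x) ↔
      ∀ f ∈ Y, Tendsto (fun t => f (w t)) l (𝓝 (f x)) := by
  rw [sigmaTop, nhds_induced, tendsto_comap_iff, tendsto_pi_nhds, Subtype.forall]
  rfl

theorem continuous_sigmaTop {Y : Set (X →L[ℝ] ℝ)} {f : X →L[ℝ] ℝ} (hf : f ∈ Y) :
    @Continuous X ℝ (sigmaTop Y) _ f := by
  let _ := sigmaTop Y
  exact continuous_iff_continuousAt.2 fun x => tendsto_nhds_sigmaTop.1 tendsto_id f hf

theorem t2Space_sigmaTop {Y : Set (X →L[ℝ] ℝ)} (hY : ∀ x x', (∀ f ∈ Y, f x = f x') → x = x') :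
    @T2Space X (sigmaTop Y) :=
  @T2Space.of_injective_continuous _ _ (sigmaTop Y) _ _ _
    (fun x x' h => hY x x' fun f hf => congr_fun h ⟨f, hf⟩) continuous_induced_dom

theorem isCompact_closure_sigmaTop {Y : Set (X →L[ℝ] ℝ)} {S : Set X}
    (hS : ∀ U : Ultrafilter X, S ∈ U → ∃ x, ∀ f ∈ Y, Tendsto f U (𝓝 (f x))) :
    @IsCompact X (sigmaTop Y) (@closure X (sigmaTop Y) S) :=
  @isCompact_closure_of_forall_ultrafilter_le_nhds X (sigmaTop Y) (regularSpace_induced _) S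
    fun U hU => (hS U hU).imp fun _ hx => tendsto_id'.1 (tendsto_nhds_sigmaTop.2 hx)

theorem tendsto_nhds_weakStarTop {T : Type*} {l : Filter T} {w : T → X →L[ℝ] ℝ}
    {f : X →L[ℝ] ℝ} : Tendsto w l (@nhds _ (weakStarTop X) f) ↔
      ∀ x, Tendsto (fun t => w t x) l (𝓝 (f x)) := by
  rw [weakStarTop, nhds_induced, tendsto_comap_iff, tendsto_pi_nhds]
  rfl

end WeakTopology

section Multimeasure

variable {Ω X : Type*} [MeasurableSpace Ω] [NormedAddCommGroup X] [NormedSpace ℝ X]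

theorem le_supportFn {f : X →L[ℝ] ℝ} {S : Set X} (hS : Bornology.IsBounded S) {x : X}
    (hx : x ∈ S) : f x ≤ supportFn f S :=
  le_csSup (f.lipschitz.isBounded_image hS).bddAbove ⟨x, hx, rfl⟩

theorem supportFn_le {f : X →L[ℝ] ℝ} {S : Set X} (hS : S.Nonempty) {a : ℝ}
    (ha : ∀ x ∈ S, f x ≤ a) : supportFn f S ≤ a :=
  csSup_le (hS.image f) (Set.forall_mem_image.2 ha)

theorem abs_supportFn_le {f : X →L[ℝ] ℝ} {S : Set X} (hS : Bornology.IsBounded S)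
    (hne : S.Nonempty) {a : ℝ} (ha : ∀ x ∈ S, |f x| ≤ a) : |supportFn f S| ≤ a := by
  obtain ⟨x, hx⟩ := hne
  exact abs_le.2 ⟨(abs_le.1 (ha x hx)).1.trans (le_supportFn hS hx),
    supportFn_le ⟨x, hx⟩ fun y hy => (abs_le.1 (ha y hy)).2⟩

variable {Y : Submodule ℝ (X →L[ℝ] ℝ)} {M : Set Ω → Set X}

theorem exists_isFiniteMeasure_forall_abs_le
    (hbd : ∀ A, MeasurableSet A → Bornology.IsBounded (M A))
    (hca : ∀ f ∈ Y, CountablyAdditive fun A => supportFn f (M A)) {f : X →L[ℝ] ℝ} (hf : f ∈ Y) :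
    ∃ μ : Measure Ω, IsFiniteMeasure μ ∧ ∀ A, MeasurableSet A → ∀ x ∈ M A, |f x| ≤ μ.real A := by
  obtain ⟨σ, hσ⟩ := exists_signedMeasure_forall_eq (hca f hf)
  obtain ⟨τ, hτ⟩ := exists_signedMeasure_forall_eq (hca (-f) (Y.neg_mem hf))
  refine ⟨σ.totalVariation + τ.totalVariation, inferInstance, fun A hA x hx => ?_⟩
  have hle : f x ≤ σ.totalVariation.real A :=
    (le_supportFn (hbd A hA) hx).trans <|
      (hσ A hA).ge.trans <| (le_abs_self _).trans (σ.norm_le_totalVariation A)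
  have hge : -f x ≤ τ.totalVariation.real A :=
    (le_supportFn (f := -f) (hbd A hA) hx).trans <|
      (hτ A hA).ge.trans <| (le_abs_self _).trans (τ.norm_le_totalVariation A)
  rw [measureReal_add_apply]
  exact abs_le'.2 ⟨hle.trans (le_add_of_nonneg_right measureReal_nonneg),
    hge.trans (le_add_of_nonneg_left measureReal_nonneg)⟩

theorem exists_isFiniteMeasure_forall_mem_span
    (hbd : ∀ A, MeasurableSet A → Bornology.IsBounded (M A))
    (hca : ∀ f ∈ Y, CountablyAdditive fun A => supportFn f (M A)) {f : ℕ → X →L[ℝ] ℝ}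
    (hf : ∀ n, f n ∈ Y) :
    ∃ ρ : Measure Ω, IsFiniteMeasure ρ ∧ ∀ g ∈ Submodule.span ℝ (Set.range f),
      ∃ c : ℝ, ∀ A, MeasurableSet A → ∀ x ∈ M A, |g x| ≤ c * ρ.real A := by
  choose μ hμfin hμ using fun n => exists_isFiniteMeasure_forall_abs_le hbd hca (hf n)
  obtain ⟨ρ, hρfin, hρ⟩ := exists_isFiniteMeasure_forall_measureReal_le_mul μ
  refine ⟨ρ, hρfin, fun g hg => ?_⟩
  induction hg using Submodule.span_induction with
  | mem g hg =>
    obtain ⟨n, rfl⟩ := hg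
    exact (hρ n).imp fun c hc A hA x hx => (hμ n A hA x hx).trans (hc A)
  | zero => exact ⟨0, fun A _ x _ => by simp⟩
  | add g g' _ _ hg hg' =>
    obtain ⟨c, hc⟩ := hg
    obtain ⟨c', hc'⟩ := hg'
    refine ⟨c + c', fun A hA x hx => (abs_add_le _ _).trans ?_⟩
    rw [add_mul]
    exact add_le_add (hc A hA x hx) (hc' A hA x hx)
  | smul r g _ hg =>
    obtain ⟨c, hc⟩ := hg
    refine ⟨|r| * c, fun A hA x hx => (abs_mul r (g x)).trans_le ?_⟩
    rw [mul_assoc]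
    exact mul_le_mul_of_nonneg_left (hc A hA x hx) (abs_nonneg r)

theorem exists_forall_mem_iUnion_abs_le
    (hbd : ∀ A, MeasurableSet A → Bornology.IsBounded (M A))
    (hca : ∀ f ∈ Y, CountablyAdditive fun A => supportFn f (M A)) {f : X →L[ℝ] ℝ} (hf : f ∈ Y) :
    ∃ C, ∀ x ∈ ⋃ (A : Set Ω) (_ : MeasurableSet A), M A, |f x| ≤ C := by
  obtain ⟨μ, _, hμ⟩ := exists_isFiniteMeasure_forall_abs_le hbd hca hf
  refine ⟨μ.real Set.univ, fun x hx => ?_⟩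
  obtain ⟨A, hA, hxA⟩ := Set.mem_iUnion₂.1 hx
  exact (hμ A hA x hxA).trans (measureReal_mono (Set.subset_univ A))

theorem exists_mem_convexHull_forall_mem_biUnion_lt
    (hY : ∀ x x', (∀ f ∈ Y, f x = f x') → x = x') {ι : Type*} {N : ι → Set X} {t : Set ι}
    (ht : t.Finite)
    (hcpt : ∀ i ∈ t, @IsCompact X (sigmaTop (Y : Set (X →L[ℝ] ℝ)))
      (@closure X (sigmaTop (Y : Set (X →L[ℝ] ℝ))) (N i)))
    {f : ℕ → X →L[ℝ] ℝ} (hf : ∀ n, f n ∈ Y) {C : ℝ}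
    (hC : ∀ n, ∀ i ∈ t, ∀ x ∈ N i, |f n x| ≤ C)
    (hlim : ∀ x, Tendsto (fun n => f n x) atTop (𝓝 0)) {δ : ℝ} (hδ : 0 < δ) :
    ∃ g ∈ convexHull ℝ (Set.range f), ∀ i ∈ t, ∀ x ∈ N i, g x < δ := by
  have hclosure : @IsCompact X (sigmaTop (Y : Set (X →L[ℝ] ℝ)))
      (@closure X (sigmaTop (Y : Set (X →L[ℝ] ℝ))) (⋃ i ∈ t, N i)) := by
    rw [@Set.Finite.closure_biUnion X (sigmaTop (Y : Set (X →L[ℝ] ℝ))) _ _ ht]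
    exact @Set.Finite.isCompact_biUnion X _ (sigmaTop (Y : Set (X →L[ℝ] ℝ))) _ _ ht hcpt
  obtain ⟨g, hg, hlt⟩ := @exists_mem_convexHull_forall_mem_lt X
    (sigmaTop (Y : Set (X →L[ℝ] ℝ))) (t2Space_sigmaTop hY) (X →L[ℝ] ℝ) _ _
    (LinearMap.ltoFun ℝ X ℝ ℝ ∘ₗ ContinuousLinearMap.coeLM ℝ) f
    (fun n => continuous_sigmaTop (hf n)) _ hclosure C
    (fun n x hx => (Set.mem_iUnion₂.1 hx).elim fun i ⟨hi, hxi⟩ => hC n i hi x hxi) hlim δ hδ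
  exact ⟨g, hg, fun i hi x hx => hlt x (Set.mem_biUnion hi hx)⟩

theorem exists_finite_forall_eventually_apply_lt
    (hne : ∀ A, MeasurableSet A → (M A).Nonempty)
    (hbd : ∀ A, MeasurableSet A → Bornology.IsBounded (M A))
    (hca : ∀ f ∈ Y, CountablyAdditive fun A => supportFn f (M A))
    {U : Ultrafilter X} (hU : ∀ᶠ x in U, ∃ A, MeasurableSet A ∧ x ∈ M A)
    (ρ : Measure Ω) [IsFiniteMeasure ρ] (C : ℝ) {ε : ℝ} (hε : 0 < ε) :
    ∃ 𝓑 : Set (Set Ω), 𝓑.Finite ∧ (∀ B ∈ 𝓑, MeasurableSet B) ∧ ∃ δ > 0, ∀ g ∈ Y,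
      (∃ c, ∀ A, MeasurableSet A → ∀ x ∈ M A, |g x| ≤ c * ρ.real A) →
      (∀ A, MeasurableSet A → ∀ x ∈ M A, |g x| ≤ C) →
      (∀ B ∈ 𝓑, ∀ x ∈ M B, g x ≤ δ) → ∀ᶠ x in U, g x < ε := by
  have hU' : ∀ᶠ x in U, ∃ A : {A : Set Ω // MeasurableSet A}, x ∈ M A :=
    hU.mono fun x ⟨A, hA, hx⟩ => ⟨⟨A, hA⟩, hx⟩
  obtain ⟨A, hxA⟩ := hU'.choice
  obtain ⟨𝓑, h𝓑fin, h𝓑, δ, hδ, htest⟩ :=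
    exists_finite_forall_eventually_lt ρ U (fun x => (A x).2) C hε
  refine ⟨𝓑, h𝓑fin, h𝓑, δ, hδ, ?_⟩
  rintro g hgY ⟨c, hc⟩ hC hgδ
  obtain ⟨σ, hσ⟩ := exists_signedMeasure_forall_eq (hca g hgY)
  have hlt : ∀ᶠ x in U, σ (A x) < ε := by
    refine htest σ ⟨c, fun B hB => ?_⟩ (fun B hB => ?_) fun B hB => ?_
    · exact (hσ B hB).symm ▸ abs_supportFn_le (hbd B hB) (hne B hB) (hc B hB)
    · exact (hσ B hB).symm ▸ abs_supportFn_le (hbd B hB) (hne B hB) (hC B hB)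
    · exact (hσ B (h𝓑 B hB)).trans_le (supportFn_le (hne B (h𝓑 B hB)) (hgδ B hB))
  filter_upwards [hlt, hxA] with x hlt hx
  exact (le_supportFn (hbd _ (A x).2) hx).trans_lt ((hσ _ (A x).2).symm.trans_lt hlt)

theorem exists_eventually_lt_of_tendsto_zero
    (hY : ∀ x x', (∀ f ∈ Y, f x = f x') → x = x')
    (hne : ∀ A, MeasurableSet A → (M A).Nonempty)
    (hbd : ∀ A, MeasurableSet A → Bornology.IsBounded (M A))
    (hcpt : ∀ A, MeasurableSet A → @IsCompact X (sigmaTop (Y : Set (X →L[ℝ] ℝ)))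
      (@closure X (sigmaTop (Y : Set (X →L[ℝ] ℝ))) (M A)))
    (hca : ∀ f ∈ Y, CountablyAdditive fun A => supportFn f (M A))
    {U : Ultrafilter X} (hU : ∀ᶠ x in U, ∃ A, MeasurableSet A ∧ x ∈ M A)
    {f : ℕ → X →L[ℝ] ℝ} (hf : ∀ n, f n ∈ Y) {C : ℝ}
    (hC : ∀ n A, MeasurableSet A → ∀ x ∈ M A, |f n x| ≤ C)
    (hlim : ∀ x, Tendsto (fun n => f n x) atTop (𝓝 0)) {ε : ℝ} (hε : 0 < ε) :
    ∃ n, ∀ᶠ x in U, f n x < ε := by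
  by_contra! hge
  obtain ⟨ρ, _, hρ⟩ := exists_isFiniteMeasure_forall_mem_span hbd hca hf
  obtain ⟨𝓑, h𝓑fin, h𝓑, δ, hδ, htest⟩ :=
    exists_finite_forall_eventually_apply_lt hne hbd hca hU ρ C hε
  obtain ⟨g, hg, hgδ⟩ := exists_mem_convexHull_forall_mem_biUnion_lt hY h𝓑fin
    (fun B hB => hcpt B (h𝓑 B hB)) hf (fun n B hB => hC n B (h𝓑 B hB)) hlim hδ
  have hgY : g ∈ Y := convexHull_min (Set.range_subset_iff.2 hf) Y.convex hg
  have hgC (A : Set Ω) (hA : MeasurableSet A) (x : X) (hx : x ∈ M A) : |g x| ≤ C := by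
    have hconvex : Convex ℝ ((fun f : X →L[ℝ] ℝ => f x) ⁻¹' Metric.closedBall 0 C) :=
      (convex_closedBall 0 C).is_linear_preimage ⟨fun _ _ => rfl, fun _ _ => rfl⟩
    simpa using convexHull_min (Set.range_subset_iff.2 fun n => by simpa using hC n A hA x hx)
      hconvex hg
  have hgε : ∀ᶠ x in U, ε ≤ g x := by
    have hconvex : Convex ℝ {f : X →L[ℝ] ℝ | ∀ᶠ x in U, ε ≤ f x} :=
      fun f₁ h₁ f₂ h₂ _ _ ha hb hab => by
        filter_upwards [h₁, h₂] with x h₁ h₂ using convex_Ici ε h₁ h₂ ha hb hab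
    exact convexHull_min (s := Set.range f) (Set.range_subset_iff.2 hge) hconvex hg
  have hgρ := hρ g (convexHull_min Submodule.subset_span (Submodule.convex _) hg)
  have hglt := htest g hgY hgρ hgC fun B hB x hx => (hgδ B hB x hx).le
  obtain ⟨x, hlt, hle⟩ := (hglt.and hgε).exists
  exact hlt.not_ge hle

end Multimeasure

section Duality

variable {X V : Type*} [NormedAddCommGroup X] [NormedSpace ℝ X] [NormedAddCommGroup V]
  [NormedSpace ℝ V]

/-- The evaluation map `X → V*` of a pairing `e : V → X*`. For the inclusion `e` of a subspace
`V = Y ⊆ X*`, points of `X` are thus viewed as functionals on `Y`. -/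
noncomputable def dualEval (e : V →L[ℝ] X →L[ℝ] ℝ) : X →L[ℝ] StrongDual ℝ V :=
  e.flip

theorem IsNorming.exists_antilipschitzWith {Y : Submodule ℝ (X →L[ℝ] ℝ)} (hY : IsNorming Y) :
    ∃ K, AntilipschitzWith K (dualEval (V := Y) Y.subtypeL) := by
  obtain ⟨c, hc, hle⟩ := hY
  refine ⟨⟨c⁻¹, (inv_pos.2 hc).le⟩, AddMonoidHomClass.antilipschitz_of_bound _ fun x => ?_⟩
  refine (le_inv_mul_iff₀ hc).2 ((hle x).trans (Real.sSup_le ?_ (norm_nonneg _)))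
  rintro _ ⟨f, ⟨hfY, hf⟩, rfl⟩
  exact (dualEval (V := Y) Y.subtypeL x).unit_le_opNorm ⟨f, hfY⟩ (mem_closedBall_zero_iff.1 hf)

theorem exists_forall_mem_norm_dualEval_le [CompleteSpace V] (e : V →L[ℝ] X →L[ℝ] ℝ) {R : Set X}
    (hR : ∀ v, ∃ C, ∀ x ∈ R, |e v x| ≤ C) : ∃ r, ∀ x ∈ R, ‖dualEval e x‖ ≤ r := by
  obtain ⟨r, hr⟩ := banach_steinhaus (g := fun x : R => dualEval e x)
    fun v => (hR v).imp fun C hC x => hC x x.2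
  exact ⟨r, fun x hx => hr ⟨x, hx⟩⟩

theorem exists_mem_span_norm_sub_le {ι : Type*} [Finite ι] {L : ι → StrongDual ℝ V}
    {φ : StrongDual ℝ V} {ε : ℝ} (hε : 0 ≤ ε)
    (hφ : ∀ v, ‖v‖ ≤ 1 → (∀ i, L i v = 0) → φ v ≤ ε) :
    ∃ ψ ∈ Submodule.span ℝ (Set.range L), ‖φ - ψ‖ ≤ ε := by
  let N : Submodule ℝ V := ⨅ i, (L i).toLinearMap.ker
  have hN (v : N) (i : ι) : L i v = 0 := (Submodule.mem_iInf _).1 v.2 i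
  have hnorm : ‖φ.comp N.subtypeL‖ ≤ ε := by
    refine ContinuousLinearMap.opNorm_le_of_unit_norm hε fun v hv => abs_le'.2 ⟨?_, ?_⟩
    · exact hφ v hv.le (hN v)
    · rw [← map_neg]
      exact hφ (-v : N) ((norm_neg v).trans hv).le (hN (-v))
  obtain ⟨χ, hχ, hχnorm⟩ := exists_extension_norm_eq N (φ.comp N.subtypeL)
  have hspan : ContinuousLinearMap.coeLM ℝ (φ - χ) ∈
      Submodule.span ℝ (Set.range (ContinuousLinearMap.coeLM ℝ ∘ L)) :=
    mem_span_of_iInf_ker_le_ker fun v hv => sub_eq_zero.2 (hχ ⟨v, hv⟩).symm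
  rw [Set.range_comp, ← Submodule.map_span] at hspan
  obtain ⟨ψ, hψ, hψeq⟩ := hspan
  obtain rfl : ψ = φ - χ := ContinuousLinearMap.coe_injective hψeq
  exact ⟨φ - χ, hψ, by rwa [sub_sub_cancel, hχnorm]⟩

theorem PropertyE.exists_finset_forall_le (hE : PropertyE X) (e : V →L[ℝ] X →L[ℝ] ℝ)
    {φ : StrongDual ℝ V}
    (hφ : ∀ v : ℕ → V, (∀ n, ‖v n‖ ≤ 1) → (∀ x, Tendsto (fun n => e (v n) x) atTop (𝓝 0)) →
      ∀ ε > 0, ∃ n, φ (v n) < ε) {ε : ℝ} (hε : 0 < ε) :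
    ∃ F : Finset X, ∀ v, ‖v‖ ≤ 1 → (∀ x ∈ F, e v x = 0) → φ v ≤ ε := by
  by_contra! hlarge
  choose v hv hvanish hvε using hlarge
  let D : Set V := Metric.closedBall 0 1 ∩ {v | ε ≤ φ v}
  have hconvex : Convex ℝ (e '' D) :=
    ((convex_closedBall 0 1).inter (convex_halfSpace_ge φ.toLinearMap.isLinear ε)).linear_image
      e.toLinearMap
  have hbounded : Bornology.IsBounded (e '' D) :=
    e.lipschitz.isBounded_image (Metric.isBounded_closedBall.subset Set.inter_subset_left)
  have hlim : Tendsto (fun F => e (v F)) atTop (@nhds _ (weakStarTop X) 0) := by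
    refine tendsto_nhds_weakStarTop.2 fun x => tendsto_const_nhds.congr' ?_
    filter_upwards [eventually_ge_atTop {x}] with F hF
    exact (hvanish F x (hF (Finset.mem_singleton_self x))).symm
  have hzero : (0 : X →L[ℝ] ℝ) ∈ @closure _ (weakStarTop X) (e '' D) :=
    @mem_closure_of_tendsto _ (weakStarTop X) _ _ _ _ _ _ hlim <| Eventually.of_forall fun F =>
      ⟨v F, ⟨mem_closedBall_zero_iff.2 (hv F), (hvε F).le⟩, rfl⟩
  obtain ⟨g, hgD, hg⟩ := hE _ hconvex hbounded 0 hzero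
  choose w hwD hwg using hgD
  obtain ⟨n, hn⟩ := hφ w (fun n => mem_closedBall_zero_iff.1 (hwD n).1)
    (fun x => by simpa only [hwg, zero_apply] using hg x) ε hε
  exact hn.not_ge (hwD n).2

theorem PropertyE.mem_range_dualEval [CompleteSpace X] (hE : PropertyE X)
    {e : V →L[ℝ] X →L[ℝ] ℝ} {K : NNReal} (he : AntilipschitzWith K (dualEval e))
    {φ : StrongDual ℝ V}
    (hφ : ∀ v : ℕ → V, (∀ n, ‖v n‖ ≤ 1) → (∀ x, Tendsto (fun n => e (v n) x) atTop (𝓝 0)) →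
      ∀ ε > 0, ∃ n, φ (v n) < ε) : φ ∈ Set.range (dualEval e) := by
  rw [← (he.isClosed_range (dualEval e).uniformContinuous).closure_eq, Metric.mem_closure_iff]
  intro ε hε
  obtain ⟨F, hF⟩ := hE.exists_finset_forall_le e hφ (half_pos hε)
  obtain ⟨ψ, hψ, hle⟩ := exists_mem_span_norm_sub_le (L := fun x : F => dualEval e x)
    (half_pos hε).le fun v hv hvanish => hF v hv fun x hx => hvanish ⟨x, hx⟩
  have hrange : Submodule.span ℝ (Set.range fun x : F => dualEval e x) ≤
      (dualEval e).toLinearMap.range :=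
    Submodule.span_le.2 (Set.range_subset_iff.2 fun x => ⟨x, rfl⟩)
  exact ⟨ψ, hrange hψ, (dist_eq_norm φ ψ).trans_lt (hle.trans_lt (half_lt_self hε))⟩

theorem PropertyE.exists_forall_tendsto [CompleteSpace X] (hE : PropertyE X)
    {e : V →L[ℝ] X →L[ℝ] ℝ} {K : NNReal} (he : AntilipschitzWith K (dualEval e))
    {U : Ultrafilter X} {r : ℝ} (hr : ∀ᶠ x in U, ‖dualEval e x‖ ≤ r)
    (hU : ∀ v : ℕ → V, (∀ n, ‖v n‖ ≤ 1) → (∀ x, Tendsto (fun n => e (v n) x) atTop (𝓝 0)) →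
      ∀ ε > 0, ∃ n, ∀ᶠ x in U, e (v n) x < ε) :
    ∃ x₀, ∀ v, Tendsto (fun x => e v x) U (𝓝 (e v x₀)) := by
  obtain ⟨φ, hφ⟩ := exists_forall_tendsto_of_eventually_norm_le U hr
  obtain ⟨x₀, rfl⟩ := hE.mem_range_dualEval he fun v hv hlim ε hε => by
    obtain ⟨n, hn⟩ := hU v hv hlim (ε / 2) (half_pos hε)
    exact ⟨n, (le_of_tendsto (hφ (v n)) (hn.mono fun _ => le_of_lt)).trans_lt (half_lt_self hε)⟩
  exact ⟨x₀, hφ⟩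

end Duality

/-- Let `X` be a Banach space with property (E) and `Y ⊆ X*` a
norming norm-closed linear subspace. If `M : Σ → b(X)` has relatively `σ(X,Y)`-compact
values and `s(x*, M)` is countably additive for every `x* ∈ Y`, then `⋃_{A ∈ Σ} M(A)`
is relatively `σ(X,Y)`-compact. -/
theorem statement14 {Ω X : Type*} [MeasurableSpace Ω]
    [NormedAddCommGroup X] [NormedSpace ℝ X] [CompleteSpace X]
    (hE : PropertyE X)
    (Y : Submodule ℝ (X →L[ℝ] ℝ))
    (hYnorming : IsNorming Y)
    (hYclosed : IsClosed (Y : Set (X →L[ℝ] ℝ)))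
    (M : Set Ω → Set X)
    (hne : ∀ A : Set Ω, MeasurableSet A → (M A).Nonempty)
    (hbd : ∀ A : Set Ω, MeasurableSet A → Bornology.IsBounded (M A))
    (hcpt : ∀ A : Set Ω, MeasurableSet A →
      @IsCompact X (sigmaTop (Y : Set (X →L[ℝ] ℝ)))
        (@closure X (sigmaTop (Y : Set (X →L[ℝ] ℝ))) (M A)))
    (hca : ∀ f ∈ Y, CountablyAdditive (fun A => supportFn f (M A))) :
    @IsCompact X (sigmaTop (Y : Set (X →L[ℝ] ℝ)))
      (@closure X (sigmaTop (Y : Set (X →L[ℝ] ℝ)))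
        (⋃ (A : Set Ω) (_ : MeasurableSet A), M A)) := by
  obtain ⟨K, hK⟩ := hYnorming.exists_antilipschitzWith
  have hsep (x x' : X) (h : ∀ f ∈ Y, f x = f x') : x = x' :=
    hK.injective (ContinuousLinearMap.ext fun f => h f f.2)
  have : CompleteSpace Y := hYclosed.completeSpace_coe
  obtain ⟨r, hr⟩ := exists_forall_mem_norm_dualEval_le (V := Y) Y.subtypeL fun f =>
    exists_forall_mem_iUnion_abs_le hbd hca f.2
  refine isCompact_closure_sigmaTop fun U hU => ?_
  have hU' : ∀ᶠ x in U, ∃ A, MeasurableSet A ∧ x ∈ M A :=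
    mem_of_superset hU fun x hx => by simpa using hx
  have hlt (f : ℕ → Y) (hf : ∀ n, ‖f n‖ ≤ 1)
      (hlim : ∀ x, Tendsto (fun n => (f n : X →L[ℝ] ℝ) x) atTop (𝓝 0)) (ε : ℝ) (hε : 0 < ε) :
      ∃ n, ∀ᶠ x in U, (f n : X →L[ℝ] ℝ) x < ε := by
    have hbound (n : ℕ) (A : Set Ω) (hA : MeasurableSet A) (x : X) (hx : x ∈ M A) :
        |(f n : X →L[ℝ] ℝ) x| ≤ r :=
      ((dualEval (V := Y) Y.subtypeL x).unit_le_opNorm (f n) (hf n)).trans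
        (hr x (Set.mem_biUnion hA hx))
    exact exists_eventually_lt_of_tendsto_zero hsep hne hbd hcpt hca hU' (fun n => (f n).2) hbound
      hlim hε
  obtain ⟨x, hx⟩ := hE.exists_forall_tendsto (V := Y) hK (mem_of_superset hU hr) hlt
  exact ⟨x, fun f hf => hx ⟨f, hf⟩⟩
end

section
/- Let E be a real linear space, let C_1 and C_2 be convex non-empty subsets of E, and let x be an extreme point of C_1 + C_2. Then there exist unique x_1 ∈ C_1 and x_2 ∈ C_2 such that x = x_1 + x_2; moreover, x_1 is an extreme point of C_1 and x_2 is an extreme point of C_2. -/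
open Pointwise

/-!
If `x = a + b = c + d` with `a, c ∈ s` and `b, d ∈ t`, then `x` is also the midpoint of the mixed
sums `a + d` and `c + b`, both of which lie in `s + t`; if `x` is extreme, these are equal to `x`,
and cancellation gives `b = d` and `a = c`. Extremality passes to the summands because translation
by `a` carries an open segment with endpoints in `t` through `b` to one with endpoints in `s + t`
through `x`.
-/

section ExtremePointsAdd

variable {𝕜 E : Type*} [Ring 𝕜] [AddCommGroup E] [Module 𝕜 E] {s t : Set E} {a b : E}

section PartialOrder

variable [PartialOrder 𝕜] [AddRightMono 𝕜]

theorem right_mem_extremePoints_of_add_mem_extremePoints (ha : a ∈ s) (hb : b ∈ t)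
    (hab : a + b ∈ (s + t).extremePoints 𝕜) : b ∈ t.extremePoints 𝕜 :=
  ⟨hb, fun _ hu _ hv huv ↦ add_left_cancel <|
    hab.2 (Set.add_mem_add ha hu) (Set.add_mem_add ha hv)
      ((mem_openSegment_translate 𝕜 a).mpr huv)⟩

theorem left_mem_extremePoints_of_add_mem_extremePoints (ha : a ∈ s) (hb : b ∈ t)
    (hab : a + b ∈ (s + t).extremePoints 𝕜) : a ∈ s.extremePoints 𝕜 := by
  rw [add_comm a b, add_comm s t] at hab
  exact right_mem_extremePoints_of_add_mem_extremePoints hb ha hab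

end PartialOrder

variable [LinearOrder 𝕜] [IsStrictOrderedRing 𝕜] [Invertible (2 : 𝕜)]

theorem eq_and_eq_of_add_eq_add_of_mem_extremePoints {c d : E}
    (ha : a ∈ s) (hb : b ∈ t) (hc : c ∈ s) (hd : d ∈ t)
    (hab : a + b ∈ (s + t).extremePoints 𝕜) (h : a + b = c + d) : a = c ∧ b = d := by
  have had_eq : a + d = (a + b) - (b - d) := by abel
  have hcb_eq : c + b = (a + b) + (b - d) := by rw [h]; abel
  have mem_openSegment_mixed_sums : a + b ∈ openSegment 𝕜 (a + d) (c + b) := by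
    rw [had_eq, hcb_eq]
    exact mem_openSegment_sub_add (a + b) (b - d)
  have had : a + d = a + b :=
    hab.2 (Set.add_mem_add ha hd) (Set.add_mem_add hc hb) mem_openSegment_mixed_sums
  exact ⟨add_right_cancel (had.trans h), (add_left_cancel had).symm⟩

theorem statement17_general {x : E} (hx : x ∈ (s + t).extremePoints 𝕜) :
    (∃! p : E × E, p.1 ∈ s ∧ p.2 ∈ t ∧ x = p.1 + p.2) ∧
      ∀ a ∈ s, ∀ b ∈ t, x = a + b → a ∈ s.extremePoints 𝕜 ∧ b ∈ t.extremePoints 𝕜 := by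
  constructor
  · obtain ⟨a, ha, b, hb, rfl⟩ := Set.mem_add.mp hx.1
    refine ⟨(a, b), ⟨ha, hb, rfl⟩, ?_⟩
    rintro ⟨c, d⟩ ⟨hc, hd, h⟩
    obtain ⟨rfl, rfl⟩ := eq_and_eq_of_add_eq_add_of_mem_extremePoints ha hb hc hd hx h
    rfl
  · rintro a ha b hb rfl
    exact ⟨left_mem_extremePoints_of_add_mem_extremePoints ha hb hx,
      right_mem_extremePoints_of_add_mem_extremePoints ha hb hx⟩

end ExtremePointsAdd

/-- Let `E` be a real linear space, `C₁, C₂ ⊆ E` convex non-empty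
sets, and `x` an extreme point of `C₁ + C₂`. Then there is a unique pair
`(x₁, x₂) ∈ C₁ × C₂` with `x = x₁ + x₂`; moreover any such `x₁` is an extreme point of
`C₁` and any such `x₂` is an extreme point of `C₂`. -/
theorem statement17 {E : Type*} [AddCommGroup E] [Module ℝ E]
    (C₁ C₂ : Set E) (h₁ : C₁.Nonempty) (h₂ : C₂.Nonempty)
    (hc₁ : Convex ℝ C₁) (hc₂ : Convex ℝ C₂)
    (x : E) (hx : x ∈ (C₁ + C₂).extremePoints ℝ) :
    (∃! p : E × E, p.1 ∈ C₁ ∧ p.2 ∈ C₂ ∧ x = p.1 + p.2) ∧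
      ∀ x₁ ∈ C₁, ∀ x₂ ∈ C₂, x = x₁ + x₂ →
        x₁ ∈ C₁.extremePoints ℝ ∧ x₂ ∈ C₂.extremePoints ℝ :=
  statement17_general hx
end
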